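/- Let A be an invertible Mealy automaton over X. If finite words v and u of the same length are e-equivalent, then there exists an element g ∈ G_A such that g(v) = u and g acts trivially beyond v, i.e., g(vw) = uw for every finite word w. -/

import Mathlib

/-- A Mealy automaton over alphabet `X` with state set `S`:
the transition-output function sends `(s, x)` to `(output letter, next state)`. -/
structure Mealy (S X : Type*) where
  step : S → X → X × S

namespace Mealy

variable {S X : Type*}

/-- The section `s|_v`: the state reached after processing the word `v` from state `s`. -/
def sec (A : Mealy S X) (s : S) : List X → S
  | [] => s
  | x :: v => A.sec (A.step s x).2 v

/-- The action of a state on finite words (lists of letters, read left to right). -/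
def act (A : Mealy S X) (s : S) : List X → List X
  | [] => []
  | x :: v => (A.step s x).1 :: A.act (A.step s x).2 v

/-- A state is trivial if it acts on `X^*` as the identity. -/
def IsTrivialState (A : Mealy S X) (s : S) : Prop := ∀ v : List X, A.act s v = v

/-- An automaton is invertible if every state acts on the letters by a permutation. -/
def Invertible (A : Mealy S X) : Prop :=
  ∀ s : S, Function.Bijective fun x : X => (A.step s x).1

/-- The automaton group `G_A`: the subgroup of permutations of `X^*` generated by
the permutations defined by the states of `A`. -/
def autGroup (A : Mealy S X) : Subgroup (Equiv.Perm (List X)) :=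
  Subgroup.closure { f : Equiv.Perm (List X) | ∃ s : S, ∀ v : List X, f v = A.act s v }

/-- A left-infinite sequence `…x₂x₁` is encoded as `p : ℕ → X` with `p 0 = x₁`, `p 1 = x₂`, ….
It is post-critical if it is the sequence of input labels or of output labels of a
left-infinite directed path in `A` ending at a non-trivial state. -/
def IsPostCritical (A : Mealy S X) (p : ℕ → X) : Prop :=
  ∃ (σ : ℕ → S) (inp out : ℕ → X),
    (∀ n, A.step (σ (n + 1)) (inp n) = (out n, σ n)) ∧
      ¬A.IsTrivialState (σ 0) ∧ (p = inp ∨ p = out)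

/-- The post-critical set of `A`. -/
def PostCriticalSet (A : Mealy S X) : Set (ℕ → X) := { p | A.IsPostCritical p }

/-- An automaton is bounded if its post-critical set is finite. -/
def Bounded (A : Mealy S X) : Prop := A.PostCriticalSet.Finite

/-- The length-`n` suffix (as a finite word, read left to right) of a left-infinite
sequence `…x₂x₁` encoded as `p : ℕ → X`: the word `xₙ…x₂x₁`. -/
def lsuffix (p : ℕ → X) (n : ℕ) : List X := (List.range n).reverse.map p

/-- A finite word is post-critical if it is a suffix of some post-critical sequence. -/
def IsPostCriticalWord (A : Mealy S X) (v : List X) : Prop :=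
  ∃ p : ℕ → X, A.IsPostCritical p ∧ v = lsuffix p v.length

/-- The base relation for `e`-equivalence: `v ≈ u` if some state `s` satisfies
`s|_v` trivial and `s(v) = u`, or `s|_u` trivial and `s(u) = v`. -/
def ERel (A : Mealy S X) (v u : List X) : Prop :=
  ∃ s : S, (A.IsTrivialState (A.sec s v) ∧ A.act s v = u) ∨
    (A.IsTrivialState (A.sec s u) ∧ A.act s u = v)

/-- `e`-equivalence: the equivalence relation generated by `≈`. -/
def EEquiv (A : Mealy S X) : List X → List X → Prop := Relation.EqvGen A.ERel

/-- The `e`-orbit of a word. -/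
def eOrbit (A : Mealy S X) (v : List X) : Set (List X) := { u | A.EEquiv v u }

/-- The orbit of a finite word under the automaton group. -/
def orbit (A : Mealy S X) (v : List X) : Set (List X) := { u | ∃ g ∈ A.autGroup, g v = u }

/-- Reachability by a directed path in the automaton. -/
def Reaches (A : Mealy S X) : S → S → Prop :=
  Relation.ReflTransGen fun a b => ∃ x : X, (A.step a x).2 = b

/-- The states of the circuit part `C(A)`: states reachable by a directed path
from some directed cycle of `A`. -/
def circuitStates (A : Mealy S X) : Set S :=
  { s | ∃ t : S, (∃ x : X, A.Reaches (A.step t x).2 t) ∧ A.Reaches t s }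

/-- The circuit part `C(A)` as a subautomaton. -/
def circuitPart (A : Mealy S X) : Mealy A.circuitStates X where
  step s x :=
    ((A.step s.1 x).1,
      ⟨(A.step s.1 x).2, by
        obtain ⟨t, hc, hr⟩ := s.2
        exact ⟨t, hc, hr.tail ⟨x, rfl⟩⟩⟩)

/-- The subautomaton induced on a subset of states closed under transitions. -/
def subautomaton (A : Mealy S X) (T : Set S)
    (hT : ∀ s ∈ T, ∀ x : X, (A.step s x).2 ∈ T) : Mealy T X where
  step s x := ((A.step s.1 x).1, ⟨(A.step s.1 x).2, hT s.1 s.2 x⟩)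

/-- The extension of a length- and prefix-preserving map on finite words to
right-infinite sequences (letter by letter). -/
def extOmega (f : List X → List X) (w : ℕ → X) : ℕ → X :=
  fun n => (f ((List.range (n + 1)).map w)).getD n (w n)

/-- The orbit of a right-infinite sequence under the automaton group. -/
def orbitOmega (A : Mealy S X) (w : ℕ → X) : Set (ℕ → X) :=
  { w' | ∃ g ∈ A.autGroup, w' = extOmega (⇑(g : Equiv.Perm (List X))) w }

/-- The group `G_A` is level-transitive if it acts transitively on each level `X^n`. -/
def LevelTransitive (A : Mealy S X) : Prop :=
  ∀ v u : List X, v.length = u.length → ∃ g ∈ A.autGroup, g v = u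

end Mealy

/-- The run of a deterministic finite-state machine on a right-infinite input:
`dfaRun δ q₀ w n` is the state after reading the first `n` letters. -/
def dfaRun {Q X : Type*} (δ : Q → X → Q) (q₀ : Q) (w : ℕ → X) : ℕ → Q
  | 0 => q₀
  | n + 1 => δ (dfaRun δ q₀ w n) (w n)

/-- A concrete encoding of an invertible Mealy automaton (with state set `Fin n`
over alphabet `Fin k`) as a natural number. -/
def encodeAut (n k : ℕ) (step : Fin n → Fin k → Fin k × Fin n) : ℕ :=
  Nat.pair n (Nat.pair k (Encodable.encode
    ((List.finRange n).flatMap fun s =>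
      (List.finRange k).map fun x =>
        Nat.pair ((step s x).1 : ℕ) ((step s x).2 : ℕ))))

/-!
A state `s` whose section at `v` is trivial satisfies `s(vw) = s(v)w` for all `w`, so a single
generator of `G_A` replaces the prefix `v` by `s(v)`. Prefix replacement by the elements of a group
is an equivalence relation, so it contains the equivalence relation generated by these pairs.
-/

/-- Prefix replacement: `v` and `u` are related if some `g : G` sends `vw` to `uw` for every `w`.
It is encoded as the orbit relation of the maps `w ↦ vw` under the pointwise action of `G`. -/
def prefixOrbitRel (G X : Type*) [Group G] [MulAction G (List X)] : Setoid (List X) :=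
  (MulAction.orbitRel G (List X → List X)).comap fun v w ↦ v ++ w

theorem prefixOrbitRel_iff {G X : Type*} [Group G] [MulAction G (List X)] {v u : List X} :
    prefixOrbitRel G X v u ↔ ∃ g : G, ∀ w, g • (v ++ w) = u ++ w := by
  -- `MulAction.orbitRel` relates `a` to `b` when `g • b = a`, hence the swap.
  rw [Setoid.comm']
  exact exists_congr fun _ ↦ funext_iff

namespace Mealy

variable {S X : Type*} {A : Mealy S X}

theorem act_append (s : S) (v w : List X) :
    A.act s (v ++ w) = A.act s v ++ A.act (A.sec s v) w := by
  induction v generalizing s with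
  | nil => rfl
  | cons x v ih => exact congrArg _ (ih _)

theorem act_append_of_isTrivialState_sec {s : S} {v : List X}
    (hs : A.IsTrivialState (A.sec s v)) (w : List X) : A.act s (v ++ w) = A.act s v ++ w := by
  rw [act_append, hs w]

theorem act_injective (hA : ∀ s, Function.Injective fun x ↦ (A.step s x).1) (s : S) :
    Function.Injective (A.act s) := by
  intro v u h
  induction v generalizing s u with
  | nil => cases u with
    | nil => rfl
    | cons y u => cases h
  | cons x v ih => cases u with
    | nil => cases h
    | cons y u =>
      obtain ⟨hxy, hvu⟩ := List.cons.inj h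
      obtain rfl : x = y := hA s hxy
      rw [ih _ hvu]

theorem act_surjective (hA : ∀ s, Function.Surjective fun x ↦ (A.step s x).1) (s : S) :
    Function.Surjective (A.act s) := by
  intro u
  induction u generalizing s with
  | nil => exact ⟨[], rfl⟩
  | cons y u ih =>
    obtain ⟨x, hx⟩ := hA s y
    obtain ⟨v, hv⟩ := ih (A.step s x).2
    exact ⟨x :: v, congrArg₂ List.cons hx hv⟩

namespace Invertible

/-- The permutation of `X^*` defined by a state of an invertible automaton. -/
noncomputable def actPerm (hA : A.Invertible) (s : S) : Equiv.Perm (List X) :=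
  .ofBijective (A.act s) ⟨act_injective (fun t ↦ (hA t).1) s, act_surjective (fun t ↦ (hA t).2) s⟩

theorem actPerm_mem_autGroup (hA : A.Invertible) (s : S) : hA.actPerm s ∈ A.autGroup :=
  Subgroup.subset_closure ⟨s, fun _ ↦ rfl⟩

theorem prefixOrbitRel_act (hA : A.Invertible) {s : S} {v : List X}
    (hs : A.IsTrivialState (A.sec s v)) : prefixOrbitRel A.autGroup X v (A.act s v) :=
  prefixOrbitRel_iff.2
    ⟨⟨hA.actPerm s, hA.actPerm_mem_autGroup s⟩, act_append_of_isTrivialState_sec hs⟩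

theorem prefixOrbitRel_of_eRel (hA : A.Invertible) {v u : List X} (h : A.ERel v u) :
    prefixOrbitRel A.autGroup X v u := by
  obtain ⟨s, ⟨hs, rfl⟩ | ⟨hs, rfl⟩⟩ := h
  · exact hA.prefixOrbitRel_act hs
  · exact (prefixOrbitRel A.autGroup X).symm (hA.prefixOrbitRel_act hs)

theorem prefixOrbitRel_of_eEquiv (hA : A.Invertible) {v u : List X} (h : A.EEquiv v u) :
    prefixOrbitRel A.autGroup X v u :=
  Setoid.eqvGen_le (fun _ _ ↦ hA.prefixOrbitRel_of_eRel) h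

end Invertible

end Mealy

theorem eEquiv_realized_by_group_element_general {S X : Type*} {A : Mealy S X}
    (hA : A.Invertible) {v u : List X} (h : A.EEquiv v u) :
    ∃ g ∈ A.autGroup, g v = u ∧ ∀ w : List X, g (v ++ w) = u ++ w := by
  obtain ⟨⟨g, hg⟩, hvu : ∀ w, g (v ++ w) = u ++ w⟩ :=
    prefixOrbitRel_iff.1 (hA.prefixOrbitRel_of_eEquiv h)
  exact ⟨g, hg, by simpa only [List.append_nil] using hvu [], hvu⟩

/-- If `v` and `u` are `e`-equivalent, then some `g ∈ G_A` maps `v` to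
`u` and acts trivially beyond `v`: `g(vw) = uw` for all `w`. -/
theorem eEquiv_realized_by_group_element {S X : Type*} [Fintype S] [Fintype X]
    (hX : 2 ≤ Fintype.card X) (A : Mealy S X) (hInv : A.Invertible)
    (v u : List X) (hlen : v.length = u.length) (h : A.EEquiv v u) :
    ∃ g ∈ A.autGroup, g v = u ∧ ∀ w : List X, g (v ++ w) = u ++ w :=
  eEquiv_realized_by_group_element_general hInv h
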